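/- Let E, A be h×h real matrices, B an h×k real matrix, and R_z an invertible h×h real matrix with R_zᵀEᵀ = E·R_z ⪰ 0 and A·R_z + R_zᵀAᵀ − B·Bᵀ ≺ 0. Set K_u = −(1/2)·Bᵀ·R_z⁻¹. Then R̂ := R_z⁻¹ satisfies EᵀR̂ = R̂ᵀE ⪰ 0 and R̂ᵀ(A + B·K_u) + (A + B·K_u)ᵀR̂ = R_z⁻ᵀ(A·R_z + R_zᵀAᵀ − B·Bᵀ)·R_z⁻¹ ≺ 0; consequently the pair (E, A + B·K_u) is regular, impulse-free, and asymptotically stable. -/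

import Mathlib

open Polynomial Matrix

/-- The pencil polynomial `p(X) = det(X·E − A)` of the pair `(E, A)`. -/
noncomputable def pencil {n : Type*} [Fintype n] [DecidableEq n]
    (E A : Matrix n n ℝ) : Polynomial ℝ :=
  (Matrix.of fun i j => Polynomial.X * Polynomial.C (E i j) - Polynomial.C (A i j)).det

/-- The pair `(E, A)` is regular. -/
def RegularPair {n : Type*} [Fintype n] [DecidableEq n] (E A : Matrix n n ℝ) : Prop :=
  pencil E A ≠ 0

/-- The pair `(E, A)` is impulse-free. -/
def ImpulseFreePair {n : Type*} [Fintype n] [DecidableEq n] (E A : Matrix n n ℝ) : Prop :=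
  pencil E A ≠ 0 ∧ (pencil E A).natDegree = E.rank

/-- The pair `(E, A)` is asymptotically stable. -/
def AsympStablePair {n : Type*} [Fintype n] [DecidableEq n] (E A : Matrix n n ℝ) : Prop :=
  ∀ lam : ℂ, (lam • E.map (Complex.ofReal) - A.map (Complex.ofReal)).det = 0 → lam.re < 0

/-!
Put `M = A + B K_u`. Multiplying the pencil `X E - M` on the left by the invertible matrix `R̂ᵀ`
preserves its degree, the rank of `E` and the roots, so `(E, M)` may be replaced by
`(P, Q) = (R̂ᵀ E, R̂ᵀ M)`, where `P ⪰ 0` and `Q + Qᵀ ≺ 0`.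

* If `z P x = Q x` with `x ≠ 0` complex, then `z (x* P x) = x* Q x` has negative real part while
  `x* P x ≥ 0`, so `Re z < 0`.
* Diagonalise `P` orthogonally and split off its kernel, so that `P = diag(D, 0)` with `D`
  invertible. The kernel block `Q₂₂` still has negative definite symmetric part, hence is
  invertible, and the Schur complement gives
  `det (X P - Q) = det (-Q₂₂) det (X D - (Q₁₁ - Q₁₂ Q₂₂⁻¹ Q₂₁))`, of degree exactly `rank P`.
-/

section StrictlyDissipative

variable {m n R : Type*}

/-- A matrix is strictly dissipative if its Hermitian part is negative definite. We ask this of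
`Q + Qᴴ`, twice the Hermitian part, which avoids dividing by `2`. -/
def IsStrictlyDissipative [Ring R] [PartialOrder R] [StarRing R] (Q : Matrix n n R) : Prop :=
  (-(Q + Qᴴ)).PosDef

namespace IsStrictlyDissipative

section Ring

variable [Ring R] [PartialOrder R] [StarRing R] {Q : Matrix n n R}

lemma submatrix (hQ : IsStrictlyDissipative Q) {f : m → n} (hf : Function.Injective f) :
    IsStrictlyDissipative (Q.submatrix f f) :=
  PosDef.submatrix hQ hf

lemma conjTranspose_mul_mul_same [Fintype m] [Fintype n] (hQ : IsStrictlyDissipative Q)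
    {T : Matrix n m R} (hT : Function.Injective T.mulVec) :
    IsStrictlyDissipative (Tᴴ * Q * T) := by
  have hconj : Tᴴ * (-(Q + Qᴴ)) * T = -(Tᴴ * Q * T + (Tᴴ * Q * T)ᴴ) := by
    simp only [conjTranspose_mul, conjTranspose_conjTranspose, Matrix.mul_neg, Matrix.neg_mul,
      Matrix.mul_add, Matrix.add_mul, Matrix.mul_assoc]
  rw [IsStrictlyDissipative, ← hconj]
  exact PosDef.conjTranspose_mul_mul_same hQ hT

end Ring

section RCLike

open scoped ComplexOrder

variable {𝕜 : Type*} [RCLike 𝕜] [Fintype n] {Q : Matrix n n 𝕜}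

lemma re_dotProduct_mulVec_neg (hQ : IsStrictlyDissipative Q) {x : n → 𝕜} (hx : x ≠ 0) :
    RCLike.re (star x ⬝ᵥ Q *ᵥ x) < 0 := by
  have hpos : 0 < RCLike.re (star x ⬝ᵥ (-(Q + Qᴴ)) *ᵥ x) := PosDef.re_dotProduct_pos hQ hx
  have hstar : star x ⬝ᵥ Qᴴ *ᵥ x = star (star x ⬝ᵥ Q *ᵥ x) := by
    rw [star_dotProduct, star_mulVec, conjTranspose_conjTranspose, dotProduct_mulVec]
  simp only [neg_mulVec, add_mulVec, dotProduct_neg, dotProduct_add, hstar, map_neg, map_add,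
    RCLike.star_def, RCLike.conj_re] at hpos
  linarith

lemma isUnit_det [DecidableEq n] (hQ : IsStrictlyDissipative Q) : IsUnit Q.det := by
  rw [isUnit_iff_ne_zero]
  intro hdet
  obtain ⟨x, hx, hQx⟩ := exists_mulVec_eq_zero_iff.2 hdet
  simpa [hQx] using hQ.re_dotProduct_mulVec_neg hx

end RCLike

end IsStrictlyDissipative

end StrictlyDissipative

section Complexification

open scoped ComplexOrder MatrixOrder

variable {n : Type*} [Finite n]

lemma posSemidef_map_ofReal {P : Matrix n n ℝ} (hP : P.PosSemidef) :
    (P.map Complex.ofReal).PosSemidef := by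
  classical
  have := Fintype.ofFinite n
  obtain ⟨B, rfl⟩ := CStarAlgebra.nonneg_iff_eq_star_mul_self.mp hP.nonneg
  have hmap : (star B * B).map Complex.ofReal
      = (B.map Complex.ofReal)ᴴ * B.map Complex.ofReal := by
    ext i j
    simp [mul_apply]
  exact hmap ▸ posSemidef_conjTranspose_mul_self _

lemma posDef_map_ofReal {P : Matrix n n ℝ} (hP : P.PosDef) :
    (P.map Complex.ofReal).PosDef := by
  classical
  have := Fintype.ofFinite n
  rw [(posSemidef_map_ofReal hP.posSemidef).posDef_iff_det_ne_zero]
  have hdet : (P.map Complex.ofReal).det = P.det := (RingHom.map_det Complex.ofRealHom P).symm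
  exact hdet ▸ Complex.ofReal_ne_zero.2 hP.det_pos.ne'

lemma IsStrictlyDissipative.map_ofReal {Q : Matrix n n ℝ} (hQ : IsStrictlyDissipative Q) :
    IsStrictlyDissipative (Q.map Complex.ofReal) := by
  have hmap : (-(Q + Qᴴ)).map Complex.ofReal
      = -(Q.map Complex.ofReal + (Q.map Complex.ofReal)ᴴ) := by
    ext i j
    simp
  rw [IsStrictlyDissipative, ← hmap]
  exact posDef_map_ofReal hQ

end Complexification

lemma rank_fromBlocks_zero {l m n o R : Type*} [Finite l] [Fintype m] [Fintype o]
    [CommSemiring R] [StrongRankCondition R] (D : Matrix l m R) :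
    (fromBlocks D 0 0 (0 : Matrix n o R)).rank = D.rank := by
  classical
  have := Fintype.ofFinite l
  apply le_antisymm
  · have hfactor : fromBlocks D 0 0 (0 : Matrix n o R)
        = fromRows (1 : Matrix l l R) 0 * D * fromCols (1 : Matrix m m R) 0 := by
      rw [fromRows_mul, fromRows_mul_fromCols]
      simp
    rw [hfactor]
    exact (rank_mul_le_left _ _).trans (rank_mul_le_right _ _)
  · exact rank_submatrix_le (fromBlocks D 0 0 (0 : Matrix n o R)) Sum.inl Sum.inl

section Pencil

variable {m n : Type*} [Fintype m] [DecidableEq m] [Fintype n] [DecidableEq n]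

lemma pencil_eq_det (E A : Matrix n n ℝ) :
    pencil E A = ((X : ℝ[X]) • E.map C - A.map C).det :=
  rfl

lemma pencil_mul_mul (S T E A : Matrix n n ℝ) :
    pencil (S * E * T) (S * A * T) = C (S.det * T.det) * pencil E A := by
  have hmul : (X : ℝ[X]) • (S * E * T).map C - (S * A * T).map C
      = S.map C * ((X : ℝ[X]) • E.map C - A.map C) * T.map C := by
    simp only [Matrix.map_mul, Matrix.mul_sub, Matrix.sub_mul, Matrix.mul_smul, Matrix.smul_mul]
  have hdet (M : Matrix n n ℝ) : (M.map C).det = C M.det := (RingHom.map_det C M).symm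
  rw [pencil_eq_det, hmul, det_mul, det_mul, hdet, hdet, ← pencil_eq_det, C_mul]
  ring

lemma pencil_submatrix_equiv (e : m ≃ n) (E A : Matrix n n ℝ) :
    pencil (E.submatrix e e) (A.submatrix e e) = pencil E A := by
  rw [pencil, pencil, ← det_submatrix_equiv_self e]
  rfl

lemma pencil_one (A : Matrix n n ℝ) : pencil 1 A = A.charpoly := by
  rw [pencil_eq_det, Matrix.charpoly, charmatrix, Matrix.map_one _ C_0 C_1,
    scalar_apply, ← smul_one_eq_diagonal, RingHom.mapMatrix_apply]

lemma pencil_eq_C_det_mul_charpoly {E : Matrix n n ℝ} (hE : IsUnit E.det) (A : Matrix n n ℝ) :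
    pencil E A = C E.det * (E⁻¹ * A).charpoly := by
  simpa [mul_nonsing_inv_cancel_left _ _ hE, pencil_one] using pencil_mul_mul E 1 1 (E⁻¹ * A)

lemma pencil_fromBlocks_zero (E A₁₁ : Matrix m m ℝ) (A₁₂ : Matrix m n ℝ) (A₂₁ : Matrix n m ℝ)
    {A₂₂ : Matrix n n ℝ} (hA₂₂ : IsUnit A₂₂.det) :
    pencil (fromBlocks E 0 0 0) (fromBlocks A₁₁ A₁₂ A₂₁ A₂₂)
      = C (-A₂₂).det * pencil E (A₁₁ - A₁₂ * A₂₂⁻¹ * A₂₁) := by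
  let := invertibleOfIsUnitDet A₂₂ hA₂₂
  let := invertibleNeg A₂₂
  let := Invertible.map (C.mapMatrix (m := n)) (-A₂₂)
  have hblocks : (X : ℝ[X]) • (fromBlocks E 0 0 0).map C - (fromBlocks A₁₁ A₁₂ A₂₁ A₂₂).map C
      = fromBlocks ((X : ℝ[X]) • E.map C - A₁₁.map C) (-A₁₂.map C) (-A₂₁.map C)
          (C.mapMatrix (-A₂₂)) := by
    ext (i | i) (j | j) <;> simp
  have hschur : (X : ℝ[X]) • E.map C - A₁₁.map C
        - -A₁₂.map C * ⅟(C.mapMatrix (-A₂₂)) * -A₂₁.map C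
      = (X : ℝ[X]) • E.map C - (A₁₁ - A₁₂ * A₂₂⁻¹ * A₂₁).map C := by
    rw [← map_invOf, invOf_neg, invOf_eq_nonsing_inv, RingHom.mapMatrix_apply,
      Matrix.map_sub _ (map_sub C), Matrix.map_mul, Matrix.map_mul, Matrix.map_neg _ (map_neg C)]
    simp only [Matrix.neg_mul, Matrix.mul_neg, neg_neg]
    abel
  rw [pencil_eq_det, hblocks, det_fromBlocks₂₂, hschur, ← pencil_eq_det, RingHom.map_det]

lemma aeval_pencil (E A : Matrix n n ℝ) (z : ℂ) :
    aeval z (pencil E A) = (z • E.map Complex.ofReal - A.map Complex.ofReal).det := by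
  rw [pencil_eq_det, AlgHom.map_det]
  congr 1
  ext i j
  simp [mul_comm z]

end Pencil

section ImpulseFreePair

variable {m n : Type*} [Fintype m] [DecidableEq m] [Fintype n] [DecidableEq n]
  {E A S T : Matrix n n ℝ}

lemma impulseFreePair_mul_mul_iff (hS : IsUnit S.det) (hT : IsUnit T.det) :
    ImpulseFreePair (S * E * T) (S * A * T) ↔ ImpulseFreePair E A := by
  have hdet : S.det * T.det ≠ 0 := (hS.mul hT).ne_zero
  rw [ImpulseFreePair, ImpulseFreePair, pencil_mul_mul, natDegree_C_mul hdet,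
    rank_mul_eq_left_of_isUnit_det _ _ hT, rank_mul_eq_right_of_isUnit_det _ _ hS, mul_ne_zero_iff,
    and_iff_right (C_ne_zero.2 hdet)]

lemma impulseFreePair_mul_left_iff (hS : IsUnit S.det) :
    ImpulseFreePair (S * E) (S * A) ↔ ImpulseFreePair E A := by
  simpa using impulseFreePair_mul_mul_iff (E := E) (A := A) (T := 1) hS (by simp)

lemma impulseFreePair_submatrix_equiv_iff (e : m ≃ n) :
    ImpulseFreePair (E.submatrix e e) (A.submatrix e e) ↔ ImpulseFreePair E A := by
  rw [ImpulseFreePair, ImpulseFreePair, pencil_submatrix_equiv, rank_submatrix]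

lemma impulseFreePair_fromBlocks_zero_iff {E A₁₁ : Matrix m m ℝ} {A₁₂ : Matrix m n ℝ}
    {A₂₁ : Matrix n m ℝ} {A₂₂ : Matrix n n ℝ} (hA₂₂ : IsUnit A₂₂.det) :
    ImpulseFreePair (fromBlocks E 0 0 0) (fromBlocks A₁₁ A₁₂ A₂₁ A₂₂)
      ↔ ImpulseFreePair E (A₁₁ - A₁₂ * A₂₂⁻¹ * A₂₁) := by
  have hdet : (-A₂₂).det ≠ 0 := by
    rw [det_neg]
    exact mul_ne_zero (pow_ne_zero _ (by norm_num)) hA₂₂.ne_zero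
  rw [ImpulseFreePair, ImpulseFreePair, pencil_fromBlocks_zero _ _ _ _ hA₂₂, natDegree_C_mul hdet,
    rank_fromBlocks_zero, mul_ne_zero_iff, and_iff_right (C_ne_zero.2 hdet)]

lemma impulseFreePair_of_isUnit_det (hE : IsUnit E.det) : ImpulseFreePair E A := by
  rw [ImpulseFreePair, pencil_eq_C_det_mul_charpoly hE, natDegree_C_mul hE.ne_zero,
    charpoly_natDegree_eq_dim, rank_of_det_ne_zero hE.ne_zero]
  exact ⟨mul_ne_zero (C_ne_zero.2 hE.ne_zero) (charpoly_monic _).ne_zero, rfl⟩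

lemma impulseFreePair_diagonal (d : n → ℝ) {Q : Matrix n n ℝ}
    (hQ : IsStrictlyDissipative Q) : ImpulseFreePair (diagonal d) Q := by
  classical
  let e := Equiv.sumCompl fun i => d i ≠ 0
  let D : Matrix {i // d i ≠ 0} {i // d i ≠ 0} ℝ := diagonal fun i => d i
  have hdiag : (diagonal d).submatrix e e = fromBlocks D 0 0 0 := by
    have hsplit : d ∘ e = Sum.elim (fun i : {i // d i ≠ 0} => d i) 0 := by
      ext (i | i)
      · rfl
      · exact not_not.1 i.2
    rw [submatrix_diagonal_equiv, hsplit, ← fromBlocks_diagonal, diagonal_zero']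
  have hD : IsUnit D.det := by
    rw [det_diagonal, isUnit_iff_ne_zero]
    exact Finset.prod_ne_zero_iff.2 fun i _ => i.2
  have hQ₂₂ : IsStrictlyDissipative (Q.submatrix e e).toBlocks₂₂ :=
    hQ.submatrix Subtype.val_injective
  rw [← impulseFreePair_submatrix_equiv_iff e, hdiag, ← fromBlocks_toBlocks (Q.submatrix e e),
    impulseFreePair_fromBlocks_zero_iff hQ₂₂.isUnit_det]
  exact impulseFreePair_of_isUnit_det hD

lemma impulseFreePair_of_isHermitian {P Q : Matrix n n ℝ} (hP : P.IsHermitian)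
    (hQ : IsStrictlyDissipative Q) : ImpulseFreePair P Q := by
  let U : Matrix n n ℝ := hP.eigenvectorUnitary
  have hU : IsUnit U := Unitary.isUnit_coe
  have hdet : IsUnit U.det := (isUnit_iff_isUnit_det U).1 hU
  have hdiag : Uᵀ * P * U = diagonal hP.eigenvalues :=
    hP.conjStarAlgAut_star_eigenvectorUnitary
  rw [← impulseFreePair_mul_mul_iff (isUnit_det_transpose _ hdet) hdet, hdiag]
  exact impulseFreePair_diagonal _
    (hQ.conjTranspose_mul_mul_same (mulVec_injective_of_isUnit hU))

end ImpulseFreePair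

section AsympStablePair

variable {n : Type*} [Fintype n] [DecidableEq n]

open scoped ComplexOrder in
lemma re_neg_of_det_smul_sub_eq_zero {P Q : Matrix n n ℂ} (hP : P.PosSemidef)
    (hQ : IsStrictlyDissipative Q) {z : ℂ} (hz : (z • P - Q).det = 0) : z.re < 0 := by
  obtain ⟨x, hx, hker⟩ := exists_mulVec_eq_zero_iff.2 hz
  have hQx : Q *ᵥ x = z • P *ᵥ x := by
    rw [sub_mulVec, smul_mulVec, sub_eq_zero] at hker
    exact hker.symm
  have hneg : (star x ⬝ᵥ Q *ᵥ x).re < 0 := hQ.re_dotProduct_mulVec_neg hx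
  have hnonneg := Complex.nonneg_iff.1 (hP.dotProduct_mulVec_nonneg x)
  rw [hQx, dotProduct_smul, smul_eq_mul, Complex.mul_re, ← hnonneg.2, mul_zero, sub_zero] at hneg
  exact neg_of_mul_neg_left hneg hnonneg.1

variable {E A S : Matrix n n ℝ}

lemma asympStablePair_iff_aeval_pencil :
    AsympStablePair E A ↔ ∀ z : ℂ, aeval z (pencil E A) = 0 → z.re < 0 := by
  simp only [AsympStablePair, aeval_pencil]

lemma asympStablePair_mul_left_iff (hS : IsUnit S.det) :
    AsympStablePair (S * E) (S * A) ↔ AsympStablePair E A := by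
  have hpencil : pencil (S * E) (S * A) = C S.det * pencil E A := by
    simpa using pencil_mul_mul S 1 E A
  simp [asympStablePair_iff_aeval_pencil, hpencil, hS.ne_zero]

lemma asympStablePair_of_posSemidef {P Q : Matrix n n ℝ} (hP : P.PosSemidef)
    (hQ : IsStrictlyDissipative Q) : AsympStablePair P Q := fun _ hz =>
  re_neg_of_det_smul_sub_eq_zero (posSemidef_map_ofReal hP) hQ.map_ofReal hz

end AsympStablePair

section Lyapunov

variable {n : Type*} [Fintype n] {E A R : Matrix n n ℝ}

lemma isStrictlyDissipative_transpose_mul (hA : (-(Rᵀ * A + Aᵀ * R)).PosDef) :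
    IsStrictlyDissipative (Rᵀ * A) := by
  simpa [IsStrictlyDissipative, conjTranspose_eq_transpose_of_trivial] using hA

variable [DecidableEq n]

lemma isUnit_det_transpose_of_lyapunov (hA : (-(Rᵀ * A + Aᵀ * R)).PosDef) : IsUnit Rᵀ.det := by
  have hdet := (isStrictlyDissipative_transpose_mul hA).isUnit_det
  rw [det_mul] at hdet
  exact isUnit_of_mul_isUnit_left hdet

theorem impulseFreePair_of_lyapunov (hE : (Eᵀ * R).IsHermitian)
    (hA : (-(Rᵀ * A + Aᵀ * R)).PosDef) : ImpulseFreePair E A := by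
  have hRE : (Rᵀ * E).IsHermitian := by simpa using hE.transpose
  rw [← impulseFreePair_mul_left_iff (isUnit_det_transpose_of_lyapunov hA)]
  exact impulseFreePair_of_isHermitian hRE (isStrictlyDissipative_transpose_mul hA)

theorem asympStablePair_of_lyapunov (hE : (Eᵀ * R).PosSemidef)
    (hA : (-(Rᵀ * A + Aᵀ * R)).PosDef) : AsympStablePair E A := by
  have hRE : (Rᵀ * E).PosSemidef := by simpa using hE.transpose
  rw [← asympStablePair_mul_left_iff (isUnit_det_transpose_of_lyapunov hA)]
  exact asympStablePair_of_posSemidef hRE (isStrictlyDissipative_transpose_mul hA)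

end Lyapunov

section Feedback

variable {n k α : Type*} [Fintype n] [DecidableEq n] [CommRing α]

lemma transpose_mul_inv_eq_inv_transpose_mul {E R : Matrix n n α} (hR : IsUnit R.det)
    (hER : Rᵀ * Eᵀ = E * R) : Eᵀ * R⁻¹ = (R⁻¹)ᵀ * E := by
  have hRT : IsUnit Rᵀ.det := isUnit_det_transpose R hR
  rw [transpose_nonsing_inv]
  calc Eᵀ * R⁻¹ = Rᵀ⁻¹ * (Rᵀ * Eᵀ) * R⁻¹ := by rw [nonsing_inv_mul_cancel_left _ _ hRT]
    _ = Rᵀ⁻¹ * E := by rw [hER, Matrix.mul_assoc, mul_nonsing_inv_cancel_right _ _ hR]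

lemma inv_transpose_mul_add_transpose_mul_inv {R : Matrix n n α} (hR : IsUnit R.det)
    (M : Matrix n n α) :
    (R⁻¹)ᵀ * M + Mᵀ * R⁻¹ = (R⁻¹)ᵀ * (M * R + Rᵀ * Mᵀ) * R⁻¹ := by
  have hRT : IsUnit Rᵀ.det := isUnit_det_transpose R hR
  rw [transpose_nonsing_inv, Matrix.mul_add, Matrix.add_mul,
    nonsing_inv_mul_cancel_left _ _ hRT, Matrix.mul_assoc, mul_nonsing_inv_cancel_right _ _ hR]

lemma closedLoop_mul_add_transpose {K : Type*} [Field K] [NeZero (2 : K)] [Fintype k]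
    {R : Matrix n n K} (hR : IsUnit R.det) (A : Matrix n n K) (B : Matrix n k K)
    {F : Matrix k n K} (hF : F = -(1 / 2 : K) • (Bᵀ * R⁻¹)) :
    (A + B * F) * R + Rᵀ * (A + B * F)ᵀ = A * R + Rᵀ * Aᵀ - B * Bᵀ := by
  have hFR : F * R = -(1 / 2 : K) • Bᵀ := by
    rw [hF, Matrix.smul_mul, nonsing_inv_mul_cancel_right _ _ hR]
  have hclosed : (A + B * F) * R = A * R - (1 / 2 : K) • (B * Bᵀ) := by
    rw [Matrix.add_mul, Matrix.mul_assoc, hFR, Matrix.mul_smul, neg_smul, sub_eq_add_neg]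
  rw [← transpose_mul, hclosed, transpose_sub, transpose_smul, transpose_mul, transpose_mul,
    transpose_transpose, sub_add_sub_comm, ← add_smul, add_halves, one_smul]

lemma posSemidef_inv_transpose_mul {E R : Matrix n n ℝ} (hR : IsUnit R.det)
    (hER : (E * R).PosSemidef) : ((R⁻¹)ᵀ * E).PosSemidef := by
  simpa [Matrix.mul_assoc, mul_nonsing_inv _ hR] using hER.conjTranspose_mul_mul_same R⁻¹

lemma posDef_neg_inv_transpose_mul_mul_inv {N R : Matrix n n ℝ} (hR : IsUnit R.det)
    (hN : (-N).PosDef) : (-((R⁻¹)ᵀ * N * R⁻¹)).PosDef := by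
  have hinj : Function.Injective (R⁻¹).mulVec :=
    mulVec_injective_of_isUnit ((isUnit_iff_isUnit_det _).2 (isUnit_nonsing_inv_det R hR))
  simpa using hN.conjTranspose_mul_mul_same hinj

end Feedback

/-- With `K_u = −(1/2) Bᵀ R_z⁻¹`, `R_zᵀEᵀ = E R_z ⪰ 0` and
`A R_z + R_zᵀAᵀ − B Bᵀ ≺ 0`, the matrix `R̂ = R_z⁻¹` satisfies the dual Lyapunov
conditions and `(E, A + B K_u)` is regular, impulse-free and asymptotically stable. -/
theorem stmt10 (h k : ℕ) (E A : Matrix (Fin h) (Fin h) ℝ)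
    (B : Matrix (Fin h) (Fin k) ℝ)
    (Rz : Matrix (Fin h) (Fin h) ℝ) (hRz : IsUnit Rz.det)
    (h1 : Rzᵀ * Eᵀ = E * Rz) (h2 : (E * Rz).PosSemidef)
    (h3 : (-(A * Rz + Rzᵀ * Aᵀ - B * Bᵀ)).PosDef)
    (Ku : Matrix (Fin k) (Fin h) ℝ) (hKu : Ku = -(1 / 2 : ℝ) • (Bᵀ * Rz⁻¹)) :
    (Eᵀ * Rz⁻¹ = (Rz⁻¹)ᵀ * E) ∧ (Eᵀ * Rz⁻¹).PosSemidef ∧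
      ((Rz⁻¹)ᵀ * (A + B * Ku) + (A + B * Ku)ᵀ * Rz⁻¹
        = (Rz⁻¹)ᵀ * (A * Rz + Rzᵀ * Aᵀ - B * Bᵀ) * Rz⁻¹) ∧
      (-((Rz⁻¹)ᵀ * (A + B * Ku) + (A + B * Ku)ᵀ * Rz⁻¹)).PosDef ∧
      RegularPair E (A + B * Ku) ∧
      ImpulseFreePair E (A + B * Ku) ∧
      AsympStablePair E (A + B * Ku) := by
  have hsymm := transpose_mul_inv_eq_inv_transpose_mul hRz h1
  have hpsd : (Eᵀ * Rz⁻¹).PosSemidef := hsymm ▸ posSemidef_inv_transpose_mul hRz h2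
  have hlyap := inv_transpose_mul_add_transpose_mul_inv hRz (A + B * Ku)
  rw [closedLoop_mul_add_transpose hRz A B hKu] at hlyap
  have hneg := hlyap ▸ posDef_neg_inv_transpose_mul_mul_inv hRz h3
  have himp := impulseFreePair_of_lyapunov hpsd.isHermitian hneg
  exact ⟨hsymm, hpsd, hlyap, hneg, himp.1, himp, asympStablePair_of_lyapunov hpsd hneg⟩
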